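/- Let G and H be connected graphs of order at least two, with G of order n₁. If G⊙H is not isomorphic to K_{n₁}⊙P₂ and not isomorphic to K_{n₁}⊙P₃, then dim(G⊙H) ≥ (n₁/(n₁-1))·pd(G). -/

import Mathlib

/-!
Write `S` for a minimum resolving set of `G ⊙ H`. Two vertices in the same copy of `H` are
equidistant from every vertex outside that copy (`corona_dist_outside`), so `S` resolves every
copy from the inside. Since `H` has at least two vertices, `S` meets every copy, and
`dim(G ⊙ H) ≥ n₁`.

If `G` is not complete, it contains an induced path `u, v, w`; merging `u` and `v` and leaving all
other vertices as singletons gives a resolving partition, so `pd(G) ≤ n₁ - 1` and the bound follows.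

If `G` is complete, `pd(G) ≤ n₁` suffices provided `S` meets every copy at least twice, because
`n₁ / (n₁ - 1) ≤ 2`. If some copy met `S` in a single vertex `c`, then distances to `c` within the
copy take only the values `0, 1, 2`, so `c` has at most one neighbour and at most one further
non-neighbour in `H`. As `H` is connected, `H` is `P₂` or `P₃` (`path_of_one_landmark`), and
`G ⊙ H` is one of the two excluded graphs.
-/

open SimpleGraph

/-- The corona product `G ⊙ H`: one copy of `G`, one copy of `H` for each vertex of `G`,
with the `i`-th vertex of `G` joined to every vertex of the `i`-th copy of `H`. -/
def corona {α β : Type*} (G : SimpleGraph α) (H : SimpleGraph β) :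
    SimpleGraph (α ⊕ α × β) :=
  SimpleGraph.fromRel (fun x y =>
    match x, y with
    | Sum.inl a, Sum.inl b => G.Adj a b
    | Sum.inl a, Sum.inr iu => a = iu.1
    | Sum.inr iu, Sum.inr jw => iu.1 = jw.1 ∧ H.Adj iu.2 jw.2
    | _, _ => False)

/-- The distance from a vertex to a set of vertices: `d(v,A) = min_{u ∈ A} d(v,u)`. -/
noncomputable def setDist {α : Type*} (G : SimpleGraph α) (v : α) (A : Set α) : ℕ :=
  sInf (G.dist v '' A)

/-- `S` is a resolving set for `G`: distinct vertices have distinct metric representations. -/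
def IsResolvingSet {α : Type*} (G : SimpleGraph α) (S : Set α) : Prop :=
  ∀ u v : α, (∀ w ∈ S, G.dist u w = G.dist v w) → u = v

/-- The metric dimension of `G`: minimum cardinality of a resolving set. -/
noncomputable def metricDim {α : Type*} (G : SimpleGraph α) : ℕ :=
  sInf {k | ∃ S : Set α, IsResolvingSet G S ∧ S.ncard = k}

/-- A family of sets is a resolving partition for `G` if it is a partition of the vertex set
into nonempty cells and distinct vertices have distinct partition representations. -/
def IsResolvingPartition {α : Type*} (G : SimpleGraph α) (P : Set (Set α)) : Prop :=
  (∀ A ∈ P, A.Nonempty) ∧ (∀ v : α, ∃! A : Set α, A ∈ P ∧ v ∈ A) ∧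
    ∀ u v : α, (∀ A ∈ P, setDist G u A = setDist G v A) → u = v

/-- The partition dimension of `G`: minimum number of cells in a resolving partition. -/
noncomputable def partitionDim {α : Type*} (G : SimpleGraph α) : ℕ :=
  sInf {t | ∃ P : Set (Set α), IsResolvingPartition G P ∧ P.ncard = t}

/-- `c(H)`: the maximum cardinality of a connected component of `H` which is isomorphic to a
complete graph (i.e. whose vertex set is a clique). -/
noncomputable def maxCompleteComp {β : Type*} (H : SimpleGraph β) : ℕ :=
  sSup {k | ∃ C : H.ConnectedComponent, H.IsClique C.supp ∧ C.supp.ncard = k}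

/-- `β(H)`: the number of isolated vertices of `H`. -/
noncomputable def numIsolated {β : Type*} (H : SimpleGraph β) : ℕ :=
  Set.ncard {v : β | ∀ u, ¬ H.Adj v u}

/-- `α(H)`: the number of connected components of `H` of order greater than one. -/
noncomputable def numBigComp {β : Type*} (H : SimpleGraph β) : ℕ :=
  Set.ncard {C : H.ConnectedComponent | 1 < C.supp.ncard}

/-! ### Distances and resolving sets in corona products -/

section Corona

variable {V W V' W' : Type*} {G : SimpleGraph V} {H : SimpleGraph W}

lemma corona_adj_inl_inl {a b : V} :
    (corona G H).Adj (Sum.inl a) (Sum.inl b) ↔ G.Adj a b := by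
  simp only [corona, SimpleGraph.fromRel_adj]
  constructor
  · rintro ⟨_, h | h⟩
    exacts [h, h.symm]
  · intro h
    exact ⟨by simpa using h.ne, Or.inl h⟩

lemma corona_adj_inl_inr {a i : V} {w : W} :
    (corona G H).Adj (Sum.inl a) (Sum.inr (i, w)) ↔ a = i := by
  simp [corona, SimpleGraph.fromRel_adj]

lemma corona_adj_inr_inl {a i : V} {w : W} :
    (corona G H).Adj (Sum.inr (i, w)) (Sum.inl a) ↔ a = i := by
  rw [SimpleGraph.adj_comm, corona_adj_inl_inr]

lemma corona_adj_inr_inr {i j : V} {w x : W} :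
    (corona G H).Adj (Sum.inr (i, w)) (Sum.inr (j, x)) ↔ i = j ∧ H.Adj w x := by
  simp only [corona, SimpleGraph.fromRel_adj]
  constructor
  · rintro ⟨_, h | h⟩
    exacts [h, ⟨h.1.symm, h.2.symm⟩]
  · intro h
    exact ⟨by simpa using fun _ => h.2.ne, Or.inl h⟩

/-- Isomorphic factors give isomorphic corona products. -/
def coronaCongr {G' : SimpleGraph V'} {H' : SimpleGraph W'} (e : G ≃g G') (f : H ≃g H') :
    corona G H ≃g corona G' H' where
  toEquiv := Equiv.sumCongr e.toEquiv (Equiv.prodCongr e.toEquiv f.toEquiv)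
  map_rel_iff' := by
    rintro (a | ⟨i, a⟩) (b | ⟨j, b⟩)
    · simp [corona_adj_inl_inl, e.map_adj_iff]
    · simp [corona_adj_inl_inr]
    · simp [corona_adj_inr_inl]
    · simp [corona_adj_inr_inr, f.map_adj_iff]

lemma corona_connected (hG : G.Connected) : (corona G H).Connected := by
  have hinl : ∀ a b : V, (corona G H).Reachable (Sum.inl a) (Sum.inl b) := fun a b =>
    (hG.preconnected a b).map (⟨Sum.inl, fun h => corona_adj_inl_inl.2 h⟩ : G →g corona G H)
  have hinr : ∀ (i : V) (w : W), (corona G H).Reachable (Sum.inr (i, w)) (Sum.inl i) :=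
    fun i w => (corona_adj_inr_inl.2 rfl).reachable
  have : Nonempty V := hG.nonempty
  refine ⟨?_⟩
  rintro (a | ⟨i, a⟩) (b | ⟨j, b⟩)
  · exact hinl a b
  · exact (hinl a j).trans (hinr j b).symm
  · exact (hinr i a).trans (hinl i b)
  · exact ((hinr i a).trans (hinl i j)).trans (hinr j b).symm

/-- A walk leaving the `i`-th copy of `H` passes through the vertex `i` of `G`. -/
lemma corona_walk_exit {x y : V ⊕ V × W} (p : (corona G H).Walk x y) :
    ∀ (i : V) (a : W), x = Sum.inr (i, a) → (∀ b, y ≠ Sum.inr (i, b)) →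
      ∃ q : (corona G H).Walk (Sum.inl i) y, q.length + 1 ≤ p.length := by
  induction p with
  | nil => intro i a hx hy; exact absurd hx (hy a)
  | @cons x z y h p ih =>
    intro i a hx hy
    subst hx
    rcases z with z | ⟨j, b⟩
    · obtain rfl := corona_adj_inr_inl.1 h
      exact ⟨p, by simp⟩
    · obtain ⟨rfl, _⟩ := corona_adj_inr_inr.1 h
      obtain ⟨q, hq⟩ := ih i b rfl hy
      exact ⟨q, by simp; omega⟩

lemma corona_dist_outside_le (hG : G.Connected) (i : V) (a b : W) (y : V ⊕ V × W)
    (hy : ∀ c, y ≠ Sum.inr (i, c)) :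
    (corona G H).dist (Sum.inr (i, b)) y ≤ (corona G H).dist (Sum.inr (i, a)) y := by
  obtain ⟨p, hp⟩ := (corona_connected (H := H) hG).exists_walk_length_eq_dist (Sum.inr (i, a)) y
  obtain ⟨q, hq⟩ := corona_walk_exit p i a rfl hy
  have hadj : (corona G H).Adj (Sum.inr (i, b)) (Sum.inl i) := corona_adj_inr_inl.2 rfl
  have := SimpleGraph.dist_le (SimpleGraph.Walk.cons hadj q)
  simp only [SimpleGraph.Walk.length_cons] at this
  omega

/-- Vertices of one copy of `H` are equidistant from every vertex outside that copy. -/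
lemma corona_dist_outside (hG : G.Connected) (i : V) (a b : W) (y : V ⊕ V × W)
    (hy : ∀ c, y ≠ Sum.inr (i, c)) :
    (corona G H).dist (Sum.inr (i, a)) y = (corona G H).dist (Sum.inr (i, b)) y :=
  le_antisymm (corona_dist_outside_le hG i b a y hy) (corona_dist_outside_le hG i a b y hy)

lemma corona_dist_inside_nonadj (hG : G.Connected) (i : V) {a c : W} (hne : a ≠ c)
    (hadj : ¬ H.Adj a c) :
    (corona G H).dist (Sum.inr (i, a)) (Sum.inr (i, c)) = 2 := by
  have h1 : (corona G H).Adj (Sum.inr (i, a)) (Sum.inl i) := corona_adj_inr_inl.2 rfl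
  have h2 : (corona G H).Adj (Sum.inl i) (Sum.inr (i, c)) := corona_adj_inl_inr.2 rfl
  have hle := SimpleGraph.dist_le (SimpleGraph.Walk.cons h1 h2.toWalk)
  have hpos := (corona_connected (H := H) hG).pos_dist_of_ne
    (u := Sum.inr (i, a)) (v := Sum.inr (i, c)) (by simpa using hne)
  have h3 : (corona G H).dist (Sum.inr (i, a)) (Sum.inr (i, c)) ≠ 1 := by
    rw [Ne, SimpleGraph.dist_eq_one_iff_adj, corona_adj_inr_inr]
    exact fun h => hadj h.2
  simp at hle
  omega

/-- The part of a resolving set lying in the `i`-th copy of `H` already separates the vertices of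
that copy. -/
lemma resolving_copy (hG : G.Connected) {S : Set (V ⊕ V × W)}
    (hS : IsResolvingSet (corona G H) S) (i : V) {a b : W}
    (hab : ∀ c, Sum.inr (i, c) ∈ S → (corona G H).dist (Sum.inr (i, a)) (Sum.inr (i, c)) =
      (corona G H).dist (Sum.inr (i, b)) (Sum.inr (i, c))) : a = b := by
  have := hS (Sum.inr (i, a)) (Sum.inr (i, b)) fun y hy => by
    by_cases h : ∃ c, y = Sum.inr (i, c)
    · obtain ⟨c, rfl⟩ := h
      exact hab c hy
    · exact corona_dist_outside hG i a b y (not_exists.1 h)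
  simpa using this

lemma resolving_meets_copy (hG : G.Connected) [Nontrivial W] {S : Set (V ⊕ V × W)}
    (hS : IsResolvingSet (corona G H) S) (i : V) : ∃ c, Sum.inr (i, c) ∈ S := by
  by_contra! h
  obtain ⟨a, b, hab⟩ := exists_pair_ne W
  exact hab (resolving_copy hG hS i fun c hc => absurd hc (h c))

/-- A connected graph with a vertex `c` having at most one neighbour and at most one other
non-neighbour is `P₂` or `P₃`. -/
lemma path_of_one_landmark [Nontrivial W] (hH : H.Connected) (c : W)
    (hadj : ∀ a b, H.Adj a c → H.Adj b c → a = b)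
    (hnon : ∀ a b, a ≠ c → b ≠ c → ¬ H.Adj a c → ¬ H.Adj b c → a = b) :
    Nonempty (H ≃g pathGraph 2) ∨ Nonempty (H ≃g pathGraph 3) := by
  obtain ⟨a, hca⟩ := hH.preconnected.exists_adj_of_nontrivial c
  by_cases hb : ∃ b, b ≠ c ∧ ¬ H.Adj b c
  · right
    obtain ⟨b, hbc, hnb⟩ := hb
    have hall : ∀ x, x = c ∨ x = a ∨ x = b := by
      intro x
      by_cases hx : x = c
      · exact Or.inl hx
      by_cases hxc : H.Adj x c
      · exact Or.inr (Or.inl (hadj _ _ hxc hca.symm))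
      · exact Or.inr (Or.inr (hnon _ _ hx hbc hxc hnb))
    have hba : H.Adj b a := by
      obtain ⟨x, hx⟩ := hH.preconnected.exists_adj_of_nontrivial b
      rcases hall x with rfl | rfl | rfl
      · exact absurd hx hnb
      · exact hx
      · exact absurd hx (H.irrefl)
    have hca' := hca.ne
    have hba' := hba.ne
    have hbij : Function.Bijective ![c, a, b] := by
      constructor
      · intro i j h
        fin_cases i <;> fin_cases j <;> simp_all
      · intro x
        rcases hall x with rfl | rfl | rfl
        exacts [⟨0, rfl⟩, ⟨1, rfl⟩, ⟨2, rfl⟩]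
    refine ⟨SimpleGraph.Iso.symm ⟨Equiv.ofBijective _ hbij, ?_⟩⟩
    have hnb' : ¬ H.Adj c b := fun h => hnb h.symm
    intro i j
    fin_cases i <;> fin_cases j <;>
      simp [pathGraph_adj, hca, hba, hca.symm, hba.symm, hnb, hnb']
  · left
    push Not at hb
    have hca' := hca.ne
    have hbij : Function.Bijective ![c, a] := by
      constructor
      · intro i j h
        fin_cases i <;> fin_cases j <;> simp_all
      · intro x
        by_cases hx : x = c
        · exact ⟨0, hx.symm⟩
        · exact ⟨1, (hadj _ _ (hb x hx) hca.symm).symm⟩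
    refine ⟨SimpleGraph.Iso.symm ⟨Equiv.ofBijective _ hbij, ?_⟩⟩
    intro i j
    fin_cases i <;> fin_cases j <;>
      simp [pathGraph_adj, hca, hca.symm]

/-- If a resolving set has at most one vertex in some copy of `H`, then `H` is `P₂` or `P₃`. -/
lemma path_of_resolving_single (hG : G.Connected) (hH : H.Connected) [Nontrivial W]
    {S : Set (V ⊕ V × W)} (hS : IsResolvingSet (corona G H) S) (i : V) (c : W)
    (hc : ∀ d, Sum.inr (i, d) ∈ S → d = c) :
    Nonempty (H ≃g pathGraph 2) ∨ Nonempty (H ≃g pathGraph 3) := by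
  refine path_of_one_landmark hH c ?_ ?_
  · intro a b ha hb
    refine resolving_copy hG hS i fun d hd => ?_
    obtain rfl := hc d hd
    rw [SimpleGraph.dist_eq_one_iff_adj.2 (corona_adj_inr_inr.2 ⟨rfl, ha⟩),
      SimpleGraph.dist_eq_one_iff_adj.2 (corona_adj_inr_inr.2 ⟨rfl, hb⟩)]
  · intro a b ha hb ha' hb'
    refine resolving_copy hG hS i fun d hd => ?_
    obtain rfl := hc d hd
    rw [corona_dist_inside_nonadj hG i ha ha', corona_dist_inside_nonadj hG i hb hb']

lemma mul_card_le_ncard [Fintype V] [Fintype W] (S : Set (V ⊕ V × W)) (k : ℕ)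
    (h : ∀ i : V, k ≤ {x ∈ S | ∃ c, x = Sum.inr (i, c)}.ncard) :
    Fintype.card V * k ≤ S.ncard := by
  classical
  rw [Set.ncard_eq_toFinset_card']
  rw [Finset.card_eq_sum_card_fiberwise (f := Sum.elim id Prod.fst) (t := Finset.univ)
    (by intro x _; simp)]
  rw [← smul_eq_mul, ← Finset.card_univ]
  refine Finset.card_nsmul_le_sum _ _ _ fun i _ => (h i).trans ?_
  rw [← Set.ncard_coe_finset]
  refine Set.ncard_le_ncard ?_ (Set.toFinite _)
  rintro x ⟨hx, c, rfl⟩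
  simpa using hx

end Corona

/-! ### Upper bounds on the partition dimension -/

section PartitionDim

variable {V : Type*} {G : SimpleGraph V}

lemma setDist_eq_zero_of_mem {v : V} {A : Set V} (h : v ∈ A) : setDist G v A = 0 :=
  Nat.sInf_eq_zero.2 (Or.inl ⟨v, h, SimpleGraph.dist_self⟩)

lemma mem_of_setDist_eq_zero (hG : G.Connected) {v : V} {A : Set V} (hA : A.Nonempty)
    (h : setDist G v A = 0) : v ∈ A := by
  rcases Nat.sInf_eq_zero.1 h with ⟨u, hu, hd⟩ | h
  · rwa [hG.dist_eq_zero_iff.1 hd]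
  · exact absurd h (hA.image _).ne_empty

/-- The fibres of `f` form a resolving partition as soon as distinct vertices in a common fibre
are separated by their distance to some fibre. -/
lemma partitionDim_le_ncard_range [Finite V] (hG : G.Connected) (f : V → V)
    (hf : ∀ u v, f u = f v → u ≠ v →
      ∃ w, setDist G u {y | f y = f w} ≠ setDist G v {y | f y = f w}) :
    partitionDim G ≤ (Set.range f).ncard := by
  let P : Set (Set V) := (fun z => {y | f y = z}) '' Set.range f
  have hP : IsResolvingPartition G P := by
    refine ⟨?_, ?_, ?_⟩
    · rintro _ ⟨_, ⟨x, rfl⟩, rfl⟩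
      exact ⟨x, rfl⟩
    · intro v
      refine ⟨{y | f y = f v}, ⟨⟨f v, ⟨v, rfl⟩, rfl⟩, rfl⟩, ?_⟩
      rintro _ ⟨⟨_, ⟨x, rfl⟩, rfl⟩, hv⟩
      have hv : f v = f x := hv
      simp [hv]
    · intro u v h
      by_contra hne
      have hcell : ∀ w, {y | f y = f w} ∈ P := fun w => ⟨f w, ⟨w, rfl⟩, rfl⟩
      have hfuv : f u = f v := by
        have h0 := h _ (hcell v)
        rw [setDist_eq_zero_of_mem (v := v) (A := {y | f y = f v}) rfl] at h0
        exact mem_of_setDist_eq_zero (A := {y | f y = f v}) hG ⟨v, rfl⟩ h0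
      obtain ⟨w, hw⟩ := hf u v hfuv hne
      exact hw (h _ (hcell w))
  have hle : partitionDim G ≤ P.ncard := Nat.sInf_le ⟨P, hP, rfl⟩
  exact hle.trans (Set.ncard_image_le (Set.toFinite _))

lemma partitionDim_le_card [Fintype V] (hG : G.Connected) :
    partitionDim G ≤ Fintype.card V := by
  have := partitionDim_le_ncard_range hG id (fun u v h hne => absurd h hne)
  simpa [Set.ncard_univ] using this

/-- A connected graph that is not complete contains an induced path on three vertices. -/
lemma exists_induced_path (hG : G.Connected) (hne : G ≠ ⊤) :
    ∃ u v w, G.Adj u v ∧ G.Adj v w ∧ u ≠ w ∧ ¬ G.Adj u w := by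
  by_contra! h
  apply hne
  -- Without such a path, adjacency-or-equality is transitive, so walks collapse to edges.
  have key : ∀ {x y : V}, G.Walk x y → x = y ∨ G.Adj x y := by
    intro x y p
    induction p with
    | nil => exact Or.inl rfl
    | @cons x z y hxz p ih =>
      rcases ih with rfl | hzy
      · exact Or.inr hxz
      · by_cases hxy : x = y
        · exact Or.inl hxy
        · exact Or.inr (h x z y hxz hzy hxy)
  ext x y
  refine ⟨fun hxy => hxy.ne, fun hxy => ?_⟩
  obtain ⟨p⟩ := hG.preconnected x y
  exact (key p).resolve_left hxy

lemma partitionDim_lt_card [Fintype V] (hG : G.Connected) (hne : G ≠ ⊤) :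
    partitionDim G + 1 ≤ Fintype.card V := by
  classical
  obtain ⟨u, v, w, huv, hvw, huw, hnuw⟩ := exists_induced_path hG hne
  -- Merge `u` into `v`; the singleton cell `{w}` then separates them.
  let f : V → V := fun x => if x = u then v else x
  have hcell : {y | f y = f w} = {w} := by
    ext y
    have := hvw.ne
    simp only [f, Set.mem_ofPred_eq, Set.mem_singleton_iff, huw.symm, if_false]
    split_ifs with hy
    · subst hy; simp [huw, this]
    · rfl
  have hd : setDist G u {y | f y = f w} ≠ setDist G v {y | f y = f w} := by
    rw [hcell]
    simp only [setDist, Set.image_singleton, csInf_singleton]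
    rw [SimpleGraph.dist_eq_one_iff_adj.2 hvw, Ne, SimpleGraph.dist_eq_one_iff_adj]
    exact hnuw
  have hle := partitionDim_le_ncard_range hG f (fun x y hxy hne' => by
    refine ⟨w, ?_⟩
    by_cases hx : x = u
    · have hy : y ≠ u := fun hy => hne' (hx.trans hy.symm)
      have : v = y := by simpa [f, hx, hy] using hxy
      rw [hx, ← this]
      exact hd
    · by_cases hy : y = u
      · have : x = v := by simpa [f, hx, hy] using hxy
        rw [hy, this]
        exact hd.symm
      · exact absurd (by simpa [f, hx, hy] using hxy) hne')
  have hsub : Set.range f ⊆ {u}ᶜ := by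
    rintro _ ⟨x, rfl⟩
    simp only [f, Set.mem_compl_iff, Set.mem_singleton_iff]
    split_ifs with hx
    · exact huv.ne.symm
    · exact hx
  have h1 := Set.ncard_le_ncard hsub (Set.toFinite _)
  have h2 := Set.ncard_add_ncard_compl ({u} : Set V)
  rw [Set.ncard_singleton, Nat.card_eq_fintype_card] at h2
  omega

end PartitionDim

/-! ### The bound on the metric dimension -/

lemma exists_resolving_ncard_eq_metricDim {α : Type*} {G : SimpleGraph α} (hG : G.Connected) :
    ∃ S : Set α, IsResolvingSet G S ∧ S.ncard = metricDim G := by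
  have hne : {k | ∃ S : Set α, IsResolvingSet G S ∧ S.ncard = k}.Nonempty := by
    refine ⟨_, Set.univ, fun u v h => ?_, rfl⟩
    have h0 := h v (Set.mem_univ v)
    rw [SimpleGraph.dist_self] at h0
    exact hG.dist_eq_zero_iff.1 h0
  exact Nat.sInf_mem hne

/-- If `G` and `H` are connected graphs of order at least two, `G` of order `n₁`,
and `G⊙H` is isomorphic neither to `K_{n₁}⊙P₂` nor to `K_{n₁}⊙P₃`, then
`dim(G⊙H) ≥ (n₁/(n₁-1))·pd(G)`. -/
theorem stmt1 {V W : Type*} [Fintype V] [Fintype W] (G : SimpleGraph V) (H : SimpleGraph W)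
    (n₁ : ℕ) (hn₁ : Fintype.card V = n₁) (h₁ : 2 ≤ n₁) (h₂ : 2 ≤ Fintype.card W)
    (hG : G.Connected) (hH : H.Connected)
    (hni2 : ¬ Nonempty (corona G H ≃g corona (⊤ : SimpleGraph (Fin n₁)) (pathGraph 2)))
    (hni3 : ¬ Nonempty (corona G H ≃g corona (⊤ : SimpleGraph (Fin n₁)) (pathGraph 3))) :
    (metricDim (corona G H) : ℝ) ≥ ((n₁ : ℝ) / ((n₁ : ℝ) - 1)) * partitionDim G := by
  have : Nontrivial W := Fintype.one_lt_card_iff_nontrivial.1 h₂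
  obtain ⟨S, hS, hcard⟩ := exists_resolving_ncard_eq_metricDim (corona_connected (H := H) hG)
  have hn : (2 : ℝ) ≤ n₁ := by exact_mod_cast h₁
  have hpos : (0 : ℝ) < (n₁ : ℝ) - 1 := by linarith
  rw [ge_iff_le, div_mul_eq_mul_div, div_le_iff₀ hpos, ← hcard]
  by_cases hK : G = ⊤
  · have hpd : (partitionDim G : ℝ) ≤ n₁ := by
      exact_mod_cast hn₁ ▸ partitionDim_le_card hG
    have e : G ≃g (⊤ : SimpleGraph (Fin n₁)) := by
      rw [hK]
      exact SimpleGraph.Iso.completeGraph (Fintype.equivFinOfCardEq hn₁)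
    have hmul := mul_card_le_ncard S 2 fun i => by
      obtain ⟨c, hc⟩ := resolving_meets_copy hG hS i
      obtain ⟨d, hd, hdc⟩ : ∃ d, Sum.inr (i, d) ∈ S ∧ d ≠ c := by
        by_contra! hcon
        rcases path_of_resolving_single hG hH hS i c hcon with ⟨⟨f⟩⟩ | ⟨⟨f⟩⟩
        · exact hni2 ⟨coronaCongr e f⟩
        · exact hni3 ⟨coronaCongr e f⟩
      refine Nat.succ_le_of_lt ((Set.one_lt_ncard (Set.toFinite _)).2
        ⟨Sum.inr (i, d), ⟨hd, d, rfl⟩, Sum.inr (i, c), ⟨hc, c, rfl⟩, by simpa using hdc⟩)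
    rw [hn₁] at hmul
    have hmul : (n₁ : ℝ) * 2 ≤ S.ncard := by exact_mod_cast hmul
    nlinarith [mul_le_mul_of_nonneg_right hmul hpos.le]
  · have hpd : (partitionDim G : ℝ) ≤ n₁ - 1 := by
      have := partitionDim_lt_card hG hK
      rw [hn₁] at this
      have : (partitionDim G : ℝ) + 1 ≤ n₁ := by exact_mod_cast this
      linarith
    have hmul := mul_card_le_ncard S 1 fun i => by
      obtain ⟨c, hc⟩ := resolving_meets_copy hG hS i
      exact (Set.ncard_pos (Set.toFinite _)).2 ⟨Sum.inr (i, c), hc, c, rfl⟩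
    rw [hn₁, mul_one] at hmul
    have hmul : (n₁ : ℝ) ≤ S.ncard := by exact_mod_cast hmul
    exact mul_le_mul hmul hpd (by positivity) (by positivity)
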